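/- For every constraint f having imp support, there exists an imp-distinctive factor list for R_f. -/

import Mathlib

/-- A (complex-valued Boolean) constraint of arity `k`. -/
abbrev Constraint (k : ℕ) : Type := (Fin k → Bool) → ℂ

/-- The binary equality constraint `EQ = [1,0,1]`, as a two-argument function. -/
def EQc : Bool → Bool → ℂ := fun a b => if a = b then 1 else 0

/-- The binary disequality constraint `XOR = [0,1,0]`, as a two-argument function. -/
def XORc : Bool → Bool → ℂ := fun a b => if a = b then 0 else 1

/-- The binary constraint `Implies = (1,1,0,1)`, as a two-argument function. -/
def IMPc : Bool → Bool → ℂ := fun a b => if a = true ∧ b = false then 0 else 1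

/-- The unary constraint `[a, b]` (value `a` on input `0`, value `b` on input `1`). -/
def unC (a b : ℂ) : Constraint 1 := fun x => if x 0 then b else a

/-- The binary constraint `(a,b,c,d) = (f(0,0), f(0,1), f(1,0), f(1,1))`. -/
def binC (a b c d : ℂ) : Constraint 2 := fun x =>
  if x 0 then (if x 1 then d else c) else (if x 1 then b else a)

/-- `OR = [0,1,1]`. -/
def ORc : Constraint 2 := binC 0 1 1 1

/-- `Implies = (1,1,0,1)` as a binary constraint. -/
def Impliesc : Constraint 2 := binC 1 1 0 1

/-- Membership in `NZ`: the constraint is everywhere nonzero. -/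
def inNZ {k : ℕ} (f : Constraint k) : Prop := ∀ x, f x ≠ 0

/-- Membership in `DG`: the constraint is a product of unary constraints, one per variable. -/
def inDG {k : ℕ} (f : Constraint k) : Prop :=
  ∃ g : Fin k → Bool → ℂ, ∀ x, f x = ∏ i, g i (x i)

/-- Membership in `ED`: the constraint is a product of at least one factor, each factor
being a unary constraint applied to some variable, or `EQ`/`XOR` applied to two variables. -/
def inED {k : ℕ} (f : Constraint k) : Prop :=
  ∃ (l1 l2 : ℕ) (h : Fin l1 → Bool → ℂ) (j : Fin l1 → Fin k)
    (g : Fin l2 → Bool → Bool → ℂ) (m n : Fin l2 → Fin k),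
    1 ≤ l1 + l2 ∧ (∀ i, g i = EQc ∨ g i = XORc) ∧
    ∀ x, f x = (∏ i, h i (x (j i))) * ∏ i, g i (x (m i)) (x (n i))

/-- Membership in `IM`: `f ∉ NZ` and `f` is a product of at least one factor, each factor
being a unary constraint applied to some variable, or `Implies` applied to two variables. -/
def inIM {k : ℕ} (f : Constraint k) : Prop :=
  ¬ inNZ f ∧
  ∃ (l1 l2 : ℕ) (h : Fin l1 → Bool → ℂ) (j : Fin l1 → Fin k)
    (m n : Fin l2 → Fin k),
    1 ≤ l1 + l2 ∧
    ∀ x, f x = (∏ i, h i (x (j i))) * ∏ i, IMPc (x (m i)) (x (n i))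

/-- The underlying relation `R_f = {x : f x ≠ 0}` of a constraint `f`. -/
def relOf {k : ℕ} (f : Constraint k) : Set (Fin k → Bool) := {x | f x ≠ 0}

/-- Factors allowed in an IMP-style factorization of a relation:
`Δ_c(x_i)` or `Implies(x_i, x_j)`. -/
inductive ImpFactor (k : ℕ) where
  | delta (c : Bool) (i : Fin k)
  | imp (i j : Fin k)
deriving DecidableEq

/-- Evaluation of an IMP-factor at an assignment. -/
def ImpFactor.eval {k : ℕ} : ImpFactor k → (Fin k → Bool) → Bool
  | .delta c i, x => x i == c
  | .imp i j, x => !(x i) || x j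

/-- `L` is a factor list for the relation `R`: the conjunction of the factors in `L` equals `R`. -/
def isFactorListFor {k : ℕ} (L : List (ImpFactor k)) (R : Set (Fin k → Bool)) : Prop :=
  ∀ x, x ∈ R ↔ ∀ fac ∈ L, fac.eval x = true

/-- Membership in `IMP`: the relation is the conjunction of a positive number of factors of the
forms `Δ_0(x)`, `Δ_1(x)`, `Implies(x,y)`. -/
def inIMP {k : ℕ} (R : Set (Fin k → Bool)) : Prop :=
  ∃ L : List (ImpFactor k), L ≠ [] ∧ isFactorListFor L R

/-- `f` has imp support when `R_f ∈ IMP`. -/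
def hasImpSupport {k : ℕ} (f : Constraint k) : Prop := inIMP (relOf f)

/-- A factor list is imp-distinctive if no variable occurs both in a `Δ_c` factor and in an
`Implies` factor, and no factor `Implies(x,x)` occurs. -/
def impDistinctive {k : ℕ} (L : List (ImpFactor k)) : Prop :=
  (∀ i : Fin k, ¬ ((∃ c, ImpFactor.delta c i ∈ L) ∧
      (∃ j, ImpFactor.imp i j ∈ L ∨ ImpFactor.imp j i ∈ L))) ∧
  (∀ i : Fin k, ImpFactor.imp i i ∉ L)

/-- Factors of the forms `Δ_c(x_i)` or `EQ(x_i,x_j)`. -/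
inductive EqFactor (k : ℕ) where
  | delta (c : Bool) (i : Fin k)
  | eq (i j : Fin k)
deriving DecidableEq

/-- Evaluation of such a factor at an assignment. -/
def EqFactor.eval {k : ℕ} : EqFactor k → (Fin k → Bool) → Bool
  | .delta c i, x => x i == c
  | .eq i j, x => x i == x j

/-- `f` is in simple form: its representing Boolean matrix (rows indexed by `R_f`) has
no all-`0` column, no all-`1` column, and no two identical columns. -/
def simpleForm {k : ℕ} (f : Constraint k) : Prop :=
  (∀ i : Fin k, ∃ a, f a ≠ 0 ∧ a i = true) ∧
  (∀ i : Fin k, ∃ a, f a ≠ 0 ∧ a i = false) ∧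
  (∀ i j : Fin k, i ≠ j → ∃ a, f a ≠ 0 ∧ a i ≠ a j)

/-- A constraint of unspecified arity. -/
abbrev Ctr : Type := Σ k : ℕ, Constraint k

/-- T-constructibility of a constraint from a set `G` of constraints, by finitely many
applications of permutation, pinning, projection, linking, expansion, multiplication,
and normalization. -/
inductive TCon (G : Set Ctr) : Ctr → Prop where
  | base {c : Ctr} : c ∈ G → TCon G c
  | perm {k : ℕ} {g : Constraint k} (σ : Equiv.Perm (Fin k)) :
      TCon G ⟨k, g⟩ → TCon G ⟨k, fun x => g (fun i => x (σ i))⟩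
  | pinning {k : ℕ} {g : Constraint (k+1)} (i : Fin (k+1)) (c : Bool) :
      TCon G ⟨k+1, g⟩ → TCon G ⟨k, fun x => g (i.insertNth c x)⟩
  | proj {k : ℕ} {g : Constraint (k+1)} (i : Fin (k+1)) :
      TCon G ⟨k+1, g⟩ →
      TCon G ⟨k, fun x => g (i.insertNth false x) + g (i.insertNth true x)⟩
  | link {k : ℕ} {g : Constraint (k+1)} (i : Fin (k+1)) (j : Fin k) :
      TCon G ⟨k+1, g⟩ → TCon G ⟨k, fun x => g (i.insertNth (x j) x)⟩
  | expand {k : ℕ} {g : Constraint k} (i : Fin (k+1)) :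
      TCon G ⟨k, g⟩ → TCon G ⟨k+1, fun x => g (fun j => x (i.succAbove j))⟩
  | mul {k : ℕ} {g₁ g₂ : Constraint k} :
      TCon G ⟨k, g₁⟩ → TCon G ⟨k, g₂⟩ → TCon G ⟨k, fun x => g₁ x * g₂ x⟩
  | norm {k : ℕ} {g : Constraint k} (lam : ℂ) (hlam : lam ≠ 0) :
      TCon G ⟨k, g⟩ → TCon G ⟨k, fun x => lam * g x⟩

/-- T-constructibility using no projection operation. -/
inductive TConNoProj (G : Set Ctr) : Ctr → Prop where
  | base {c : Ctr} : c ∈ G → TConNoProj G c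
  | perm {k : ℕ} {g : Constraint k} (σ : Equiv.Perm (Fin k)) :
      TConNoProj G ⟨k, g⟩ → TConNoProj G ⟨k, fun x => g (fun i => x (σ i))⟩
  | pinning {k : ℕ} {g : Constraint (k+1)} (i : Fin (k+1)) (c : Bool) :
      TConNoProj G ⟨k+1, g⟩ → TConNoProj G ⟨k, fun x => g (i.insertNth c x)⟩
  | link {k : ℕ} {g : Constraint (k+1)} (i : Fin (k+1)) (j : Fin k) :
      TConNoProj G ⟨k+1, g⟩ → TConNoProj G ⟨k, fun x => g (i.insertNth (x j) x)⟩
  | expand {k : ℕ} {g : Constraint k} (i : Fin (k+1)) :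
      TConNoProj G ⟨k, g⟩ → TConNoProj G ⟨k+1, fun x => g (fun j => x (i.succAbove j))⟩
  | mul {k : ℕ} {g₁ g₂ : Constraint k} :
      TConNoProj G ⟨k, g₁⟩ → TConNoProj G ⟨k, g₂⟩ →
      TConNoProj G ⟨k, fun x => g₁ x * g₂ x⟩
  | norm {k : ℕ} {g : Constraint k} (lam : ℂ) (hlam : lam ≠ 0) :
      TConNoProj G ⟨k, g⟩ → TConNoProj G ⟨k, fun x => lam * g x⟩

/-- Pinning the `i`-th variable of `f` to the bit `c`. -/
def pinC {k : ℕ} (f : Constraint (k+1)) (i : Fin (k+1)) (c : Bool) : Constraint k :=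
  fun x => f (i.insertNth c x)

/-- `R_f` admits a good factor list: a factor list consisting only of `Implies` factors,
in which every variable is incident to at least one edge of the induced imp graph,
and whose imp graph has no (directed) cycle. -/
def hasGoodFactorList {k : ℕ} (f : Constraint k) : Prop :=
  ∃ L : List (ImpFactor k),
    isFactorListFor L (relOf f) ∧
    (∀ fac ∈ L, ∃ i j, fac = ImpFactor.imp i j) ∧
    (∀ i : Fin k, ∃ j, ImpFactor.imp i j ∈ L ∨ ImpFactor.imp j i ∈ L) ∧
    ¬ ∃ i : Fin k, Relation.TransGen (fun a b => ImpFactor.imp a b ∈ L) i i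

/-!
Instead of simplifying the given factor list, take every factor that is valid on `R_f`, except the
`Implies` factors that are trivial or touch a variable on which `R_f` is constant. An omitted
nontrivial `Implies(x_i, x_j)` is already a consequence of the `Δ` factors: if `x_i` is constantly
`0` or `x_j` is constantly `1`, this is clear; if `x_i` is constantly `1`, then so is `x_j`; and if
`x_j` is constantly `0`, then so is `x_i`.
-/

namespace ImpFactor

variable {k : ℕ} {R : Set (Fin k → Bool)} {x : Fin k → Bool} {c : Bool} {i j : Fin k}

@[simp]
theorem eval_delta_eq_true : (delta c i).eval x = true ↔ x i = c := by
  simp [eval]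

@[simp]
theorem eval_imp_eq_true : (imp i j).eval x = true ↔ (x i = true → x j = true) := by
  cases h : x i <;> simp [eval, h]

/-- A factor is valid on a relation `R` when every assignment in `R` satisfies it, so that it may be
added to any factor list for `R`. -/
def ValidOn (R : Set (Fin k → Bool)) (fac : ImpFactor k) : Prop :=
  ∀ x ∈ R, fac.eval x = true

/-- The variable `x_i` is fixed by `R` when it is constant on `R`; for `R = ∅` every variable is
fixed, to both values at once. -/
def IsFixed (R : Set (Fin k → Bool)) (i : Fin k) : Prop :=
  ∃ c, (delta c i).ValidOn R

/-- The reduced factors of `R`, which make up an imp-distinctive factor list for `R ∈ IMP`: the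
valid `Δ` factors, and the valid `Implies` factors on two distinct variables not fixed by `R`. -/
def IsReduced (R : Set (Fin k → Bool)) : ImpFactor k → Prop
  | delta c i => (delta c i).ValidOn R
  | imp i j => (imp i j).ValidOn R ∧ i ≠ j ∧ ¬ IsFixed R i ∧ ¬ IsFixed R j

theorem IsReduced.validOn : ∀ {fac : ImpFactor k}, fac.IsReduced R → fac.ValidOn R
  | delta _ _, h => h
  | imp _ _, h => h.1

theorem ValidOn.delta_true_of_imp (h : (imp i j).ValidOn R) (hi : (delta true i).ValidOn R) :
    (delta true j).ValidOn R := fun x hx =>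
  eval_delta_eq_true.2 (eval_imp_eq_true.1 (h x hx) (eval_delta_eq_true.1 (hi x hx)))

theorem ValidOn.delta_false_of_imp (h : (imp i j).ValidOn R) (hj : (delta false j).ValidOn R) :
    (delta false i).ValidOn R := fun x hx => by
  have hij := eval_imp_eq_true.1 (h x hx)
  have hj0 := eval_delta_eq_true.1 (hj x hx)
  simpa [hj0] using hij

theorem ValidOn.eval_imp_of_isFixed (h : (imp i j).ValidOn R)
    (hfix : IsFixed R i ∨ IsFixed R j) (hx : ∀ c l, (delta c l).ValidOn R → x l = c) :
    (imp i j).eval x = true := by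
  rw [eval_imp_eq_true]
  rcases hfix with ⟨_ | _, hi⟩ | ⟨_ | _, hj⟩
  · simp [hx _ _ hi]
  · simp [hx _ _ (h.delta_true_of_imp hi)]
  · simp [hx _ _ (h.delta_false_of_imp hj)]
  · simp [hx _ _ hj]

theorem ValidOn.eval_of_forall_isReduced {fac : ImpFactor k} (h : fac.ValidOn R)
    (hx : ∀ fac' : ImpFactor k, fac'.IsReduced R → fac'.eval x = true) : fac.eval x = true := by
  cases fac with
  | delta c i => exact hx _ h
  | imp i j =>
    by_cases hij : i = j
    · simp [hij]
    by_cases hfix : IsFixed R i ∨ IsFixed R j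
    · exact h.eval_imp_of_isFixed hfix fun c l hl => eval_delta_eq_true.1 (hx (delta c l) hl)
    · rw [not_or] at hfix
      exact hx _ ⟨h, hij, hfix⟩

instance : Finite (ImpFactor k) :=
  Finite.of_surjective
    (Sum.elim (fun p : Bool × Fin k => delta p.1 p.2) fun p : Fin k × Fin k => imp p.1 p.2) <| by
    rintro (⟨c, i⟩ | ⟨i, j⟩)
    · exact ⟨Sum.inl (c, i), rfl⟩
    · exact ⟨Sum.inr (i, j), rfl⟩

/-- The reduced factors of `R`, listed in an arbitrary order. -/
noncomputable def reducedList (R : Set (Fin k → Bool)) : List (ImpFactor k) :=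
  (Set.toFinite {fac : ImpFactor k | fac.IsReduced R}).toFinset.toList

@[simp]
theorem mem_reducedList {fac : ImpFactor k} : fac ∈ reducedList R ↔ fac.IsReduced R := by
  simp [reducedList]

theorem impDistinctive_reducedList (R : Set (Fin k → Bool)) : impDistinctive (reducedList R) := by
  simp only [impDistinctive, mem_reducedList]
  refine ⟨?_, fun i ⟨_, hii, _⟩ => hii rfl⟩
  rintro i ⟨hfix, j, ⟨_, _, hi, _⟩ | ⟨_, _, _, hi⟩⟩ <;> exact hi hfix

end ImpFactor

theorem isFactorListFor.reducedList {k : ℕ} {L : List (ImpFactor k)} {R : Set (Fin k → Bool)}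
    (hL : isFactorListFor L R) : isFactorListFor (ImpFactor.reducedList R) R := by
  intro x
  simp only [ImpFactor.mem_reducedList]
  refine ⟨fun hx fac hfac => hfac.validOn x hx, fun hx => (hL x).2 fun fac hfac => ?_⟩
  have hvalid : fac.ValidOn R := fun y hy => (hL y).1 hy fac hfac
  exact hvalid.eval_of_forall_isReduced hx

/-- For every constraint `f` having imp support, there exists an
imp-distinctive factor list for `R_f`. -/
theorem stmt13 (k : ℕ) (f : Constraint k) (hf : hasImpSupport f) :
    ∃ L : List (ImpFactor k), isFactorListFor L (relOf f) ∧ impDistinctive L := by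
  obtain ⟨L, -, hL⟩ := hf
  exact ⟨ImpFactor.reducedList (relOf f), hL.reducedList,
    ImpFactor.impDistinctive_reducedList (relOf f)⟩
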